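/- For every admissible locally Lipschitz curve Γ : [a,b] → ℝ³, the length of Γ in the metric d_F equals the degenerate length of its planar projection: L(Γ) = E(Π(Γ)). -/

import Mathlib

open MeasureTheory Set Filter Topology
open scoped ENNReal

noncomputable section

/-- The Euclidean norm of a vector in `ℝ × ℝ`. -/
def enorm2 (v : ℝ × ℝ) : ℝ := Real.sqrt (v.1 ^ 2 + v.2 ^ 2)

/-- The degenerate length `E(γ) = ∫ₐᵇ F(γ(t)) |γ'(t)| dt` of a planar curve. -/
def degLen (F : ℝ × ℝ → ℝ) (a b : ℝ) (γ : ℝ → ℝ × ℝ) : ℝ :=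
  ∫ t in a..b, F (γ t) * enorm2 (deriv γ t)

/-- The signed area `𝒜(γ) = ∫ₐᵇ γ¹(t) (γ²)'(t) dt` of a planar curve. -/
def sArea (a b : ℝ) (γ : ℝ → ℝ × ℝ) : ℝ :=
  ∫ t in a..b, (γ t).1 * deriv (fun s => (γ s).2) t

/-- A locally Lipschitz curve on `[a,b]` joining `p` to `q`. -/
def IsCurve (a b : ℝ) (γ : ℝ → ℝ × ℝ) (p q : ℝ × ℝ) : Prop :=
  a ≤ b ∧ LocallyLipschitz γ ∧ γ a = p ∧ γ b = q

/-- The standing hypotheses on the potential `W`: smooth, nonnegative, vanishing exactly at the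
two distinct wells `pm` and `pp`, with positive definite Hessians there, and bounded away from
zero near infinity (`liminf_{|p|→∞} W(p) > 0`). -/
structure TwoWell (W : ℝ × ℝ → ℝ) (pm pp : ℝ × ℝ) : Prop where
  smooth : ContDiff ℝ (⊤ : ℕ∞) W
  nonneg : ∀ p, 0 ≤ W p
  wells_ne : pm ≠ pp
  zeroSet : ∀ p, W p = 0 ↔ p = pm ∨ p = pp
  hess_m : ∀ v : ℝ × ℝ, v ≠ 0 → 0 < iteratedFDeriv ℝ 2 W pm ![v, v]
  hess_p : ∀ v : ℝ × ℝ, v ≠ 0 → 0 < iteratedFDeriv ℝ 2 W pp ![v, v]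
  coercive : ∃ c > 0, ∃ R : ℝ, ∀ p : ℝ × ℝ, R ≤ ‖p‖ → c ≤ W p

/-- The singular Carnot–Carathéodory distance on `ℝ³` induced by the conformal factor `F`:
the infimum of degenerate lengths of locally Lipschitz planar curves joining the planar
projections of `P` and `Q` whose signed area equals the difference of third coordinates. -/
def dCC (F : ℝ × ℝ → ℝ) (P Q : ℝ × ℝ × ℝ) : ℝ :=
  sInf { x | ∃ a b γ, IsCurve a b γ (P.1, P.2.1) (Q.1, Q.2.1) ∧
      sArea a b γ = Q.2.2 - P.2.2 ∧ degLen F a b γ = x }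

/-- The length of a curve in `ℝ³` with respect to the metric `dCC F`: the supremum over
finite partitions of the sums of distances of consecutive sample points. -/
def pathLen (F : ℝ × ℝ → ℝ) (a b : ℝ) (Γ : ℝ → ℝ × ℝ × ℝ) : ℝ :=
  sSup { x | ∃ (n : ℕ) (t : Fin (n + 1) → ℝ), Monotone t ∧ t 0 = a ∧ t (Fin.last n) = b ∧
      x = ∑ i : Fin n, dCC F (Γ (t i.castSucc)) (Γ (t i.succ)) }

/-- A curve `Γ = (Γ¹,Γ²,Γ³) : ℝ → ℝ³` is admissible on `[a,b]` if
`(Γ³)'(t) = Γ¹(t) (Γ²)'(t)` for a.e. `t ∈ (a,b)`. -/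
def Admissible (a b : ℝ) (Γ : ℝ → ℝ × ℝ × ℝ) : Prop :=
  ∀ᵐ t : ℝ ∂volume, t ∈ Set.Ioo a b →
    deriv (fun s => (Γ s).2.2) t = (Γ t).1 * deriv (fun s => (Γ s).2.1) t

/-- The planar projection `Π(Γ) = (Γ¹,Γ²)` of a curve in `ℝ³`. -/
def projCurve (Γ : ℝ → ℝ × ℝ × ℝ) : ℝ → ℝ × ℝ := fun t => ((Γ t).1, (Γ t).2.1)

/-!
The length of a curve for a nonnegative function `d` equals `∫ ρ` as soon as `d (Γ s) (Γ t)` is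
at most `∫ ρ` over `[s, t]` and, at almost every `t`, is asymptotically at least `ρ t * (s - t)` as
`s ↓ t`: the length of `Γ` up to time `t` is then a monotone function of `t` whose derivative is at
least `ρ` almost everywhere.

For `d = dCC F` and `ρ = F(γ) |γ'|`, where `γ` is the planar projection of `Γ`, the upper bound
holds because admissibility makes every arc of `γ` a competitor. For the lower bound, if `m ≤ F` on
the disc of radius `r` about `p`, then `m * min |x - p| r` has slope at most `F`, so every
competitor from `p` to `q` has degenerate length at least `m * min |q - p| r`, whatever its signed
area.
-/

section LocallyLipschitzCurves

variable {E : Type*} [NormedAddCommGroup E] [NormedSpace ℝ E]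

lemma absolutelyContinuousOnInterval_of_locallyLipschitz {X : Type*} [PseudoMetricSpace X]
    {f : ℝ → X} (hf : LocallyLipschitz f) (a b : ℝ) : AbsolutelyContinuousOnInterval f a b := by
  obtain ⟨_, hK⟩ :=
    (hf.locallyLipschitzOn (s := uIcc a b)).exists_lipschitzOnWith_of_compact isCompact_uIcc
  exact hK.absolutelyContinuousOnInterval

lemma ae_differentiableAt_of_locallyLipschitz [FiniteDimensional ℝ E] {γ : ℝ → E}
    (hγ : LocallyLipschitz γ) : ∀ᵐ t, DifferentiableAt ℝ γ t := by
  suffices LocallyBoundedVariationOn γ univ from this.ae_differentiableAt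
  intro a b _ _
  obtain ⟨_, hK⟩ :=
    (hγ.locallyLipschitzOn (s := Icc a b)).exists_lipschitzOnWith_of_compact isCompact_Icc
  rw [univ_inter, ← inter_self (Icc a b)]
  by_cases hab : a ≤ b
  · exact hK.locallyBoundedVariationOn a b (left_mem_Icc.2 hab) (right_mem_Icc.2 hab)
  · simp [BoundedVariationOn, Icc_eq_empty hab]

lemma locallyIntegrable_norm_deriv_of_locallyLipschitz [CompleteSpace E] {γ : ℝ → E}
    (hγ : LocallyLipschitz γ) : LocallyIntegrable (fun t => ‖deriv γ t‖) := by
  borelize E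
  intro t
  obtain ⟨K, U, hU, hK⟩ := hγ t
  have hbound : ∀ᶠ s in 𝓝 t, ‖deriv γ s‖ ≤ K := by
    filter_upwards [eventually_mem_nhds_iff.2 hU] with s hs
    exact norm_deriv_le_of_lipschitzOn hs hK
  refine (volume.finiteAt_nhds t).integrableAtFilter
    (measurable_deriv γ).norm.stronglyMeasurable.stronglyMeasurableAtFilter ?_
  exact isBoundedUnder_of_eventually_le (a := (K : ℝ)) (by simpa using hbound)

lemma norm_le_of_eventually_norm_sub_le {E' : Type*} [NormedAddCommGroup E'] [NormedSpace ℝ E']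
    {f : ℝ → E} {g : ℝ → E'} {f' : E} {g' : E'} {t : ℝ} (hf : HasDerivAt f f' t)
    (hg : HasDerivAt g g' t) (hle : ∀ᶠ s in 𝓝 t, ‖f s - f t‖ ≤ ‖g s - g t‖) : ‖f'‖ ≤ ‖g'‖ := by
  refine le_of_tendsto_of_tendsto hf.tendsto_slope.norm hg.tendsto_slope.norm ?_
  filter_upwards [hle.filter_mono nhdsWithin_le_nhds] with s hs
  simp only [slope_def_module, norm_smul]
  gcongr

lemma eventually_mul_sub_le_mul_norm_sub {γ : ℝ → E} {v : E} {t c m : ℝ} (hγ : HasDerivAt γ v t)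
    (hc : c < m * ‖v‖) : ∀ᶠ s in 𝓝[>] t, c * (s - t) ≤ m * ‖γ s - γ t‖ := by
  have hslope : Tendsto (fun s => m * ‖slope γ t s‖) (𝓝[>] t) (𝓝 (m * ‖v‖)) :=
    (hγ.tendsto_slope.mono_left (nhdsGT_le_nhdsNE t)).norm.const_mul m
  filter_upwards [hslope.eventually_const_lt hc, self_mem_nhdsWithin] with s hs hts
  have hpos : 0 < s - t := sub_pos.2 hts
  have hnorm : ‖γ s - γ t‖ = ‖slope γ t s‖ * (s - t) := by
    rw [← vsub_eq_sub (γ s), ← sub_smul_slope γ t s, norm_smul, Real.norm_of_nonneg hpos.le,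
      mul_comm]
  rw [hnorm, ← mul_assoc]
  gcongr

end LocallyLipschitzCurves

section WeightedLength

variable {E : Type*} [NormedAddCommGroup E] [NormedSpace ℝ E]

/-- The length `∫ₐᵇ F(γ) ‖γ'‖` of a curve for the conformal weight `F`, in an arbitrary normed
space. It is `degLen` when `E` is the Euclidean plane. -/
def weightedLen (F : E → ℝ) (a b : ℝ) (γ : ℝ → E) : ℝ :=
  ∫ t in a..b, F (γ t) * ‖deriv γ t‖

variable {F : E → ℝ} {a b : ℝ} {γ : ℝ → E}

lemma intervalIntegrable_weight_mul_norm_deriv [CompleteSpace E] (hF : Continuous F)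
    (hγ : LocallyLipschitz γ) (a b : ℝ) :
    IntervalIntegrable (fun t => F (γ t) * ‖deriv γ t‖) volume a b :=
  ((locallyIntegrable_norm_deriv_of_locallyLipschitz hγ).integrableOn_isCompact
    isCompact_uIcc).intervalIntegrable.continuousOn_mul (hF.comp hγ.continuous).continuousOn

variable [FiniteDimensional ℝ E]

lemma sub_le_weightedLen_of_slope_le (hF : Continuous F) (hF₀ : ∀ x, 0 ≤ F x) (hab : a ≤ b)
    (hγ : LocallyLipschitz γ) {φ : E → ℝ} (hφ : LocallyLipschitz φ)
    (hslope : ∀ x, ∀ᶠ y in 𝓝 x, |φ y - φ x| ≤ F x * ‖y - x‖) :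
    φ (γ b) - φ (γ a) ≤ weightedLen F a b γ := by
  have : CompleteSpace E := FiniteDimensional.complete ℝ E
  have hφγ := hφ.comp hγ
  have hac := absolutelyContinuousOnInterval_of_locallyLipschitz hφγ a b
  have hderiv : ∀ᵐ t, deriv (φ ∘ γ) t ≤ F (γ t) * ‖deriv γ t‖ := by
    filter_upwards [ae_differentiableAt_of_locallyLipschitz hφγ,
      ae_differentiableAt_of_locallyLipschitz hγ] with t hdφ hdγ
    have hnorm : ‖deriv (φ ∘ γ) t‖ ≤ ‖F (γ t) • deriv γ t‖ := by
      refine norm_le_of_eventually_norm_sub_le hdφ.hasDerivAt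
        (hdγ.hasDerivAt.const_smul (F (γ t))) ?_
      filter_upwards [hdγ.continuousAt.eventually (hslope (γ t))] with s hs
      simpa [← smul_sub, norm_smul, abs_of_nonneg (hF₀ (γ t))] using hs
    rw [norm_smul, Real.norm_of_nonneg (hF₀ _)] at hnorm
    exact (le_abs_self _).trans hnorm
  calc φ (γ b) - φ (γ a) = ∫ t in a..b, deriv (φ ∘ γ) t := hac.integral_deriv_eq_sub.symm
    _ ≤ weightedLen F a b γ :=
      intervalIntegral.integral_mono_ae hab hac.intervalIntegrable_deriv
        (intervalIntegrable_weight_mul_norm_deriv hF hγ a b) hderiv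

lemma mul_min_norm_sub_le_weightedLen (hF : Continuous F) (hF₀ : ∀ x, 0 ≤ F x) (hab : a ≤ b)
    (hγ : LocallyLipschitz γ) {m r : ℝ} (hm : 0 ≤ m) (hr : 0 ≤ r)
    (hmF : ∀ x, ‖x - γ a‖ ≤ r → m ≤ F x) :
    m * min ‖γ b - γ a‖ r ≤ weightedLen F a b γ := by
  have hφ : LipschitzWith 1 fun x => min ‖x - γ a‖ r := by
    simpa only [dist_eq_norm] using (LipschitzWith.dist_left (γ a)).min_const r
  have hslope : ∀ x, ∀ᶠ y in 𝓝 x,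
      |m * min ‖y - γ a‖ r - m * min ‖x - γ a‖ r| ≤ F x * ‖y - x‖ := by
    intro x
    by_cases hx : ‖x - γ a‖ ≤ r
    · refine Eventually.of_forall fun y => ?_
      rw [← mul_sub, abs_mul, abs_of_nonneg hm]
      exact mul_le_mul (hmF x hx) (by simpa [Real.dist_eq, dist_eq_norm] using hφ.dist_le_mul y x)
        (abs_nonneg _) (hF₀ x)
    · have hfar : ∀ᶠ y in 𝓝 x, r < ‖y - γ a‖ :=
        (continuous_id.sub continuous_const).norm.continuousAt.eventually_const_lt (not_le.1 hx)
      filter_upwards [hfar] with y hy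
      rw [min_eq_right hy.le, min_eq_right (not_le.1 hx).le, sub_self, abs_zero]
      exact mul_nonneg (hF₀ x) (norm_nonneg _)
  have hlip : LocallyLipschitz fun x => m * min ‖x - γ a‖ r :=
    ((lipschitzWith_smul m).comp hφ).locallyLipschitz
  simpa [hr] using sub_le_weightedLen_of_slope_le hF hF₀ hab hγ hlip hslope

end WeightedLength

section PartitionSums

variable {X : Type*} {d : X → X → ℝ} {Γ : ℝ → X} {a b : ℝ}

/-- The sums of `d` between consecutive sample points of `Γ` over the finite partitions of `[a, b]`,
so that `pathLen F a b Γ` is the supremum of `partitionSums (dCC F) Γ a b`. Partition points may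
repeat, and no axioms of a distance are imposed on `d`. -/
def partitionSums (d : X → X → ℝ) (Γ : ℝ → X) (a b : ℝ) : Set ℝ :=
  { x | ∃ (n : ℕ) (t : Fin (n + 1) → ℝ), Monotone t ∧ t 0 = a ∧ t (Fin.last n) = b ∧
      x = ∑ i : Fin n, d (Γ (t i.castSucc)) (Γ (t i.succ)) }

lemma partitionSums_nonempty (hab : a ≤ b) : (partitionSums d Γ a b).Nonempty :=
  ⟨_, 1, ![a, b], by simpa [Fin.monotone_iff_le_succ] using hab, rfl, rfl, rfl⟩

lemma nonneg_of_mem_partitionSums (hd : ∀ x y, 0 ≤ d x y) {x : ℝ}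
    (hx : x ∈ partitionSums d Γ a b) : 0 ≤ x := by
  obtain ⟨n, t, -, -, -, rfl⟩ := hx
  exact Finset.sum_nonneg fun i _ => hd _ _

lemma sum_fin_succ_sub_castSucc {G : Type*} [AddCommGroup G] :
    ∀ {n : ℕ} (f : Fin (n + 1) → G),
      ∑ i : Fin n, (f i.succ - f i.castSucc) = f (Fin.last n) - f 0
  | 0, f => by simp
  | n + 1, f => by
    have ih := sum_fin_succ_sub_castSucc fun i : Fin (n + 1) => f i.castSucc
    simp only [Fin.sum_univ_castSucc, Fin.succ_castSucc, ih, Fin.succ_last, Fin.castSucc_zero]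
    abel

lemma le_sub_of_mem_partitionSums {ℓ : ℝ → ℝ}
    (hle : ∀ s t, a ≤ s → s ≤ t → t ≤ b → d (Γ s) (Γ t) ≤ ℓ t - ℓ s) {x : ℝ}
    (hx : x ∈ partitionSums d Γ a b) : x ≤ ℓ b - ℓ a := by
  obtain ⟨n, t, ht, rfl, rfl, rfl⟩ := hx
  calc ∑ i : Fin n, d (Γ (t i.castSucc)) (Γ (t i.succ))
      ≤ ∑ i : Fin n, (ℓ (t i.succ) - ℓ (t i.castSucc)) := Finset.sum_le_sum fun i _ =>
        hle _ _ (ht (Fin.zero_le _)) (ht (Fin.castSucc_le_succ i)) (ht (Fin.le_last _))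
    _ = ℓ (t (Fin.last n)) - ℓ (t 0) := sum_fin_succ_sub_castSucc fun i => ℓ (t i)

lemma add_mem_partitionSums {x c : ℝ} (hbc : b ≤ c) (hx : x ∈ partitionSums d Γ a b) :
    x + d (Γ b) (Γ c) ∈ partitionSums d Γ a c := by
  obtain ⟨n, t, ht, rfl, rfl, rfl⟩ := hx
  refine ⟨n + 1, Fin.snoc (α := fun _ => ℝ) t c, ?_, ?_, Fin.snoc_last _ _, ?_⟩
  · refine Fin.monotone_iff_le_succ.2 (Fin.lastCases ?_ fun i => ?_)
    · simpa only [Fin.succ_last, Fin.snoc_castSucc, Fin.snoc_last] using hbc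
    · simpa only [Fin.succ_castSucc, Fin.snoc_castSucc] using ht (Fin.castSucc_le_succ i)
  · exact Fin.snoc_castSucc (α := fun _ => ℝ) c t 0
  · simp only [Fin.sum_univ_castSucc, Fin.succ_castSucc, Fin.snoc_castSucc, Fin.succ_last,
      Fin.snoc_last]

lemma sSup_partitionSums_add_le {c : ℝ} (hbdd : BddAbove (partitionSums d Γ a c)) (hab : a ≤ b)
    (hbc : b ≤ c) :
    sSup (partitionSums d Γ a b) + d (Γ b) (Γ c) ≤ sSup (partitionSums d Γ a c) := by
  rw [← le_sub_iff_add_le]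
  exact csSup_le (partitionSums_nonempty hab) fun x hx =>
    le_sub_iff_add_le.2 (le_csSup hbdd (add_mem_partitionSums hbc hx))

lemma le_of_eventually_mul_sub_le {f : ℝ → ℝ} {f' c t : ℝ} (hf : HasDerivAt f f' t)
    (hle : ∀ᶠ s in 𝓝[>] t, c * (s - t) ≤ f s - f t) : c ≤ f' := by
  refine ge_of_tendsto (hf.tendsto_slope.mono_left (nhdsGT_le_nhdsNE t)) ?_
  filter_upwards [hle, self_mem_nhdsWithin] with s hs hts
  rwa [slope_def_field, le_div_iff₀ (sub_pos.2 hts)]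

lemma integral_le_sub_of_monotoneOn {V ρ : ℝ → ℝ} (hab : a ≤ b) (hV : MonotoneOn V (Icc a b))
    (hρ : IntervalIntegrable ρ volume a b)
    (hle : ∀ᵐ t, t ∈ Ioo a b → DifferentiableAt ℝ V t → ρ t ≤ deriv V t) :
    ∫ t in a..b, ρ t ≤ V b - V a := by
  have hV' : MonotoneOn V (uIcc a b) := by rwa [uIcc_of_le hab]
  have hVab : 0 ≤ V b - V a :=
    sub_nonneg.2 (hV (left_mem_Icc.2 hab) (right_mem_Icc.2 hab) hab)
  have hderiv : ρ ≤ᵐ[volume.restrict (Icc a b)] deriv V := by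
    rw [← Measure.restrict_congr_set Ioo_ae_eq_Icc, EventuallyLE,
      ae_restrict_iff' measurableSet_Ioo]
    filter_upwards [hle, hV.ae_differentiableWithinAt_of_mem] with t hρt hVt ht
    exact hρt ht ((hVt (Ioo_subset_Icc_self ht)).differentiableAt (Icc_mem_nhds ht.1 ht.2))
  calc ∫ t in a..b, ρ t ≤ ∫ t in a..b, deriv V t :=
        intervalIntegral.integral_mono_ae_restrict hab hρ hV'.intervalIntegrable_deriv hderiv
    _ ≤ V b - V a := (uIcc_of_le hVab ▸ hV'.intervalIntegral_deriv_mem_uIcc).2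

lemma integral_le_sSup_partitionSums {ρ : ℝ → ℝ} (hd : ∀ x y, 0 ≤ d x y) (hab : a ≤ b)
    (hρ : IntervalIntegrable ρ volume a b)
    (hbdd : ∀ t ∈ Icc a b, BddAbove (partitionSums d Γ a t))
    (hge : ∀ᵐ t, t ∈ Ioo a b → ∀ c < ρ t, ∀ᶠ s in 𝓝[>] t, c * (s - t) ≤ d (Γ t) (Γ s)) :
    ∫ t in a..b, ρ t ≤ sSup (partitionSums d Γ a b) := by
  set V : ℝ → ℝ := fun t => sSup (partitionSums d Γ a t)
  have hsuper : ∀ {s t}, a ≤ s → s ≤ t → t ≤ b → d (Γ s) (Γ t) ≤ V t - V s :=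
    fun has hst htb => le_sub_iff_add_le'.2
      (sSup_partitionSums_add_le (hbdd _ ⟨has.trans hst, htb⟩) has hst)
  have hmono : MonotoneOn V (Icc a b) := fun s hs t ht hst =>
    sub_nonneg.1 ((hd _ _).trans (hsuper hs.1 hst ht.2))
  have hVa : 0 ≤ V a := Real.sSup_nonneg fun x hx => nonneg_of_mem_partitionSums hd hx
  have hderiv : ∀ᵐ t, t ∈ Ioo a b → DifferentiableAt ℝ V t → ρ t ≤ deriv V t := by
    filter_upwards [hge] with t hget ht hdiff
    refine le_of_forall_lt_imp_le_of_dense fun c hc =>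
      le_of_eventually_mul_sub_le hdiff.hasDerivAt ?_
    filter_upwards [hget ht c hc, Ioo_mem_nhdsGT ht.2] with s hs hts
    exact hs.trans (hsuper ht.1.le hts.1.le hts.2.le)
  linarith [integral_le_sub_of_monotoneOn hab hmono hρ hderiv]

theorem sSup_partitionSums_eq_integral {ρ : ℝ → ℝ} (hd : ∀ x y, 0 ≤ d x y) (hab : a ≤ b)
    (hρ : IntervalIntegrable ρ volume a b)
    (hle : ∀ s t, a ≤ s → s ≤ t → t ≤ b → d (Γ s) (Γ t) ≤ ∫ x in s..t, ρ x)
    (hge : ∀ᵐ t, t ∈ Ioo a b → ∀ c < ρ t, ∀ᶠ s in 𝓝[>] t, c * (s - t) ≤ d (Γ t) (Γ s)) :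
    sSup (partitionSums d Γ a b) = ∫ t in a..b, ρ t := by
  have hρ_sub : ∀ t ∈ Icc a b, IntervalIntegrable ρ volume a t := fun t ht =>
    hρ.mono_set (uIcc_subset_uIcc_left (uIcc_of_le hab ▸ ht))
  have hub : ∀ u ∈ Icc a b, ∀ x ∈ partitionSums d Γ a u, x ≤ ∫ t in a..u, ρ t := by
    intro u hu x hx
    refine (le_sub_of_mem_partitionSums (ℓ := fun s => ∫ t in a..s, ρ t) ?_ hx).trans_eq
      (by simp)
    intro s t has hst htu
    have hat := has.trans hst
    rw [intervalIntegral.integral_interval_sub_left (hρ_sub t ⟨hat, htu.trans hu.2⟩)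
      (hρ_sub s ⟨has, (hst.trans htu).trans hu.2⟩)]
    exact hle s t has hst (htu.trans hu.2)
  exact le_antisymm (csSup_le (partitionSums_nonempty hab) (hub b (right_mem_Icc.2 hab)))
    (integral_le_sSup_partitionSums hd hab hρ (fun u hu => ⟨_, hub u hu⟩) hge)

end PartitionSums

section Plane

variable {F : ℝ × ℝ → ℝ} {a b : ℝ}

/-- The identification of `ℝ × ℝ`, whose norm is the sup norm, with the Euclidean plane; it turns
`enorm2` into a norm. -/
def toEuclidean2 : (ℝ × ℝ) ≃L[ℝ] WithLp 2 (ℝ × ℝ) :=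
  (WithLp.prodContinuousLinearEquiv 2 ℝ ℝ ℝ).symm

lemma norm_toEuclidean2 (v : ℝ × ℝ) : ‖toEuclidean2 v‖ = enorm2 v := by
  simp [toEuclidean2, WithLp.prod_norm_eq_of_L2, enorm2]

lemma locallyLipschitz_toEuclidean2_comp {γ : ℝ → ℝ × ℝ} (hγ : LocallyLipschitz γ) :
    LocallyLipschitz (toEuclidean2 ∘ γ) :=
  toEuclidean2.lipschitz.locallyLipschitz.comp hγ

lemma norm_le_enorm2 (v : ℝ × ℝ) : ‖v‖ ≤ enorm2 v :=
  max_le (Real.abs_le_sqrt (by nlinarith [sq_nonneg v.2]))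
    (Real.abs_le_sqrt (by nlinarith [sq_nonneg v.1]))

lemma exists_forall_enorm2_sub_le_imp_le (hF : Continuous F) {p : ℝ × ℝ} {m : ℝ} (hm : m < F p) :
    ∃ r > 0, ∀ x, enorm2 (x - p) ≤ r → m ≤ F x := by
  obtain ⟨r, hr, hball⟩ :=
    Metric.nhds_basis_closedBall.eventually_iff.1 (hF.continuousAt.eventually_const_lt hm)
  exact ⟨r, hr, fun x hx =>
    (hball (mem_closedBall_iff_norm.2 ((norm_le_enorm2 _).trans hx))).le⟩

lemma enorm2_deriv (γ : ℝ → ℝ × ℝ) (t : ℝ) :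
    enorm2 (deriv γ t) = ‖deriv (toEuclidean2 ∘ γ) t‖ := by
  rw [← norm_toEuclidean2, ← fderiv_apply_one_eq_deriv, ← fderiv_apply_one_eq_deriv,
    toEuclidean2.comp_fderiv]
  rfl

lemma degLen_eq_weightedLen (F : ℝ × ℝ → ℝ) (a b : ℝ) (γ : ℝ → ℝ × ℝ) :
    degLen F a b γ = weightedLen (F ∘ toEuclidean2.symm) a b (toEuclidean2 ∘ γ) := by
  simp [degLen, weightedLen, enorm2_deriv]

lemma degLen_nonneg (hF₀ : ∀ x, 0 ≤ F x) (hab : a ≤ b) (γ : ℝ → ℝ × ℝ) : 0 ≤ degLen F a b γ :=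
  intervalIntegral.integral_nonneg hab fun _ _ => mul_nonneg (hF₀ _) (Real.sqrt_nonneg _)

lemma intervalIntegrable_mul_enorm2_deriv (hF : Continuous F) {γ : ℝ → ℝ × ℝ}
    (hγ : LocallyLipschitz γ) (a b : ℝ) :
    IntervalIntegrable (fun t => F (γ t) * enorm2 (deriv γ t)) volume a b := by
  simpa [enorm2_deriv] using intervalIntegrable_weight_mul_norm_deriv
    (hF.comp toEuclidean2.symm.continuous) (locallyLipschitz_toEuclidean2_comp hγ) a b

lemma mul_min_enorm2_sub_le_degLen (hF : Continuous F) (hF₀ : ∀ x, 0 ≤ F x) {γ : ℝ → ℝ × ℝ}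
    {p q : ℝ × ℝ} (hγ : IsCurve a b γ p q) {m r : ℝ} (hm : 0 ≤ m) (hr : 0 ≤ r)
    (hmF : ∀ x, enorm2 (x - p) ≤ r → m ≤ F x) :
    m * min (enorm2 (q - p)) r ≤ degLen F a b γ := by
  obtain ⟨hab, hlip, rfl, rfl⟩ := hγ
  rw [degLen_eq_weightedLen, ← norm_toEuclidean2, map_sub]
  refine mul_min_norm_sub_le_weightedLen (hF.comp toEuclidean2.symm.continuous)
    (fun x => hF₀ _) hab (locallyLipschitz_toEuclidean2_comp hlip) hm hr fun x hx => hmF _ ?_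
  simpa [← norm_toEuclidean2] using hx

end Plane

section CarnotCaratheodory

variable {F : ℝ × ℝ → ℝ} {a b : ℝ}

/-- `γ` on `[a, b]` is one of the curves over which the infimum defining `dCC F P Q` is taken. -/
def IsCompetitor (a b : ℝ) (γ : ℝ → ℝ × ℝ) (P Q : ℝ × ℝ × ℝ) : Prop :=
  IsCurve a b γ (P.1, P.2.1) (Q.1, Q.2.1) ∧ sArea a b γ = Q.2.2 - P.2.2

section Distance

variable {P Q : ℝ × ℝ × ℝ} {γ : ℝ → ℝ × ℝ}

lemma dCC_nonneg (hF₀ : ∀ x, 0 ≤ F x) (P Q : ℝ × ℝ × ℝ) : 0 ≤ dCC F P Q := by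
  refine Real.sInf_nonneg ?_
  rintro _ ⟨a, b, γ, hγ, -, rfl⟩
  exact degLen_nonneg hF₀ hγ.1 γ

lemma dCC_le_degLen (hF₀ : ∀ x, 0 ≤ F x) (hγ : IsCompetitor a b γ P Q) :
    dCC F P Q ≤ degLen F a b γ := by
  refine csInf_le ⟨0, ?_⟩ ⟨a, b, γ, hγ.1, hγ.2, rfl⟩
  rintro _ ⟨a, b, γ, hγ, -, rfl⟩
  exact degLen_nonneg hF₀ hγ.1 γ

lemma mul_min_enorm2_sub_le_dCC (hF : Continuous F) (hF₀ : ∀ x, 0 ≤ F x)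
    (hγ : IsCompetitor a b γ P Q) {m r : ℝ} (hm : 0 ≤ m) (hr : 0 ≤ r)
    (hmF : ∀ x, enorm2 (x - (P.1, P.2.1)) ≤ r → m ≤ F x) :
    m * min (enorm2 ((Q.1, Q.2.1) - (P.1, P.2.1))) r ≤ dCC F P Q := by
  refine le_csInf ⟨_, a, b, γ, hγ.1, hγ.2, rfl⟩ ?_
  rintro _ ⟨a, b, γ, hγ, -, rfl⟩
  exact mul_min_enorm2_sub_le_degLen hF hF₀ hγ hm hr hmF

end Distance

variable {Γ : ℝ → ℝ × ℝ × ℝ}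

lemma locallyLipschitz_projCurve (hΓ : LocallyLipschitz Γ) : LocallyLipschitz (projCurve Γ) :=
  (LipschitzWith.prod_fst.prodMk
    (LipschitzWith.prod_fst.comp LipschitzWith.prod_snd)).locallyLipschitz.comp hΓ

lemma sArea_projCurve (hΓ : LocallyLipschitz Γ) (hab : a ≤ b) (hadm : Admissible a b Γ) :
    sArea a b (projCurve Γ) = (Γ b).2.2 - (Γ a).2.2 := by
  have hΓ₃ : LocallyLipschitz fun t => (Γ t).2.2 :=
    (LipschitzWith.prod_snd.comp LipschitzWith.prod_snd).locallyLipschitz.comp hΓ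
  rw [← (absolutelyContinuousOnInterval_of_locallyLipschitz hΓ₃ a b).integral_deriv_eq_sub, sArea]
  refine intervalIntegral.integral_congr_ae_restrict ?_
  rw [uIoc_of_le hab, ← Measure.restrict_congr_set Ioo_ae_eq_Ioc, EventuallyEq,
    ae_restrict_iff' measurableSet_Ioo]
  filter_upwards [hadm] with t ht hmem using (ht hmem).symm

lemma isCompetitor_projCurve (hΓ : LocallyLipschitz Γ) (hadm : Admissible a b Γ) {s t : ℝ}
    (has : a ≤ s) (hst : s ≤ t) (htb : t ≤ b) : IsCompetitor s t (projCurve Γ) (Γ s) (Γ t) :=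
  ⟨⟨hst, locallyLipschitz_projCurve hΓ, rfl, rfl⟩, sArea_projCurve hΓ hst <|
    hadm.mono fun _ hx hmem => hx (Ioo_subset_Ioo has htb hmem)⟩

lemma eventually_mul_enorm2_sub_le_dCC (hF : Continuous F) (hF₀ : ∀ x, 0 ≤ F x)
    (hΓ : LocallyLipschitz Γ) (hadm : Admissible a b Γ) {t m : ℝ} (ht : t ∈ Ico a b) (hm : 0 ≤ m)
    (hmF : m < F (projCurve Γ t)) :
    ∀ᶠ s in 𝓝[>] t, m * enorm2 (projCurve Γ s - projCurve Γ t) ≤ dCC F (Γ t) (Γ s) := by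
  obtain ⟨r, hr, hball⟩ := exists_forall_enorm2_sub_le_imp_le hF hmF
  have hcont := (locallyLipschitz_toEuclidean2_comp (locallyLipschitz_projCurve hΓ)).continuous
  have hclose : ∀ᶠ s in 𝓝[>] t, enorm2 (projCurve Γ s - projCurve Γ t) ≤ r := by
    filter_upwards [nhdsWithin_le_nhds
      (hcont.continuousAt.eventually (Metric.closedBall_mem_nhds _ hr))] with s hs
    simpa [← norm_toEuclidean2] using mem_closedBall_iff_norm.1 hs
  filter_upwards [hclose, Ioo_mem_nhdsGT ht.2] with s hsr hts
  have hlower := mul_min_enorm2_sub_le_dCC hF hF₀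
    (isCompetitor_projCurve hΓ hadm ht.1 hts.1.le hts.2.le) hm hr.le hball
  exact (min_eq_left hsr).symm ▸ hlower

lemma eventually_mul_sub_le_dCC (hF : Continuous F) (hF₀ : ∀ x, 0 ≤ F x) (hΓ : LocallyLipschitz Γ)
    (hadm : Admissible a b Γ) {t c : ℝ} (ht : t ∈ Ico a b)
    (hdiff : DifferentiableAt ℝ (projCurve Γ) t)
    (hc : c < F (projCurve Γ t) * enorm2 (deriv (projCurve Γ) t)) :
    ∀ᶠ s in 𝓝[>] t, c * (s - t) ≤ dCC F (Γ t) (Γ s) := by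
  obtain hneg | hnonneg := lt_or_ge c 0
  · filter_upwards [self_mem_nhdsWithin] with s hts
    exact (mul_nonpos_of_nonpos_of_nonneg hneg.le (sub_nonneg.2 (le_of_lt hts))).trans
      (dCC_nonneg hF₀ _ _)
  have hspeed : 0 < enorm2 (deriv (projCurve Γ) t) :=
    pos_of_mul_pos_right (hnonneg.trans_lt hc) (hF₀ _)
  obtain ⟨m, hcm, hmF⟩ := exists_between ((div_lt_iff₀ hspeed).2 hc)
  have hm : 0 ≤ m := (div_nonneg hnonneg hspeed.le).trans hcm.le
  have hγ : HasDerivAt (toEuclidean2 ∘ projCurve Γ) (toEuclidean2 (deriv (projCurve Γ) t)) t :=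
    toEuclidean2.hasFDerivAt.comp_hasDerivAt t hdiff.hasDerivAt
  have hgrowth := eventually_mul_sub_le_mul_norm_sub (m := m) hγ
    (by rwa [norm_toEuclidean2, ← div_lt_iff₀ hspeed])
  filter_upwards [hgrowth, eventually_mul_enorm2_sub_le_dCC hF hF₀ hΓ hadm ht hm hmF]
    with s hgrow hlower
  rw [← norm_toEuclidean2, map_sub] at hlower
  exact hgrow.trans hlower

theorem pathLen_eq_degLen_proj_general (hF : Continuous F) (hF₀ : ∀ x, 0 ≤ F x) (hab : a ≤ b)
    (hΓ : LocallyLipschitz Γ) (hadm : Admissible a b Γ) :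
    pathLen F a b Γ = degLen F a b (projCurve Γ) := by
  have hproj := locallyLipschitz_projCurve hΓ
  refine sSup_partitionSums_eq_integral (dCC_nonneg hF₀) hab
    (intervalIntegrable_mul_enorm2_deriv hF hproj a b)
    (fun s t has hst htb => dCC_le_degLen hF₀ (isCompetitor_projCurve hΓ hadm has hst htb)) ?_
  filter_upwards [ae_differentiableAt_of_locallyLipschitz hproj] with t hdiff ht c hc
  exact eventually_mul_sub_le_dCC hF hF₀ hΓ hadm (Ioo_subset_Ico_self ht) hdiff hc

end CarnotCaratheodory

/-- for every admissible locally Lipschitz curve `Γ : [a,b] → ℝ³`, its length in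
the metric `d_F` equals the degenerate length of its planar projection: `L(Γ) = E(Π(Γ))`. -/
theorem pathLen_eq_degLen_proj
    (W : ℝ × ℝ → ℝ) (pm pp : ℝ × ℝ) (hW : TwoWell W pm pp)
    (F : ℝ × ℝ → ℝ) (hF : F = fun p => Real.sqrt (W p))
    (a b : ℝ) (hab : a ≤ b) (Γ : ℝ → ℝ × ℝ × ℝ)
    (hlip : LocallyLipschitz Γ) (hadm : Admissible a b Γ) :
    pathLen F a b Γ = degLen F a b (projCurve Γ) := by
  subst hF
  exact pathLen_eq_degLen_proj_general hW.smooth.continuous.sqrt (fun _ => Real.sqrt_nonneg _) hab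
    hlip hadm
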